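/- In a non-degenerate instance, let X be a partial EFX allocation and g an unallocated good, and let s be an agent. Suppose either (a) the envy graph E_X is acyclic and s is its unique source, or (b) s is a most envious agent for X_s ∪ {g} (the champion graph has a 1-cycle at s). Then there exists a partial EFX allocation Y with Y_1 ∪ Y_2 ∪ Y_3 ⊆ X_1 ∪ X_2 ∪ X_3 ∪ {g} such that v_j(Y_j) ≥ v_j(X_j) for every agent j and v_s(Y_s) > v_s(X_s). -/

import Mathlib

open Finset

/-- Additive value of a bundle `S` under per-good valuation `v`. -/
noncomputable def val {G : Type*} (v : G → ℝ) (S : Finset G) : ℝ := ∑ g ∈ S, v g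

/-- `X` is EFX: no agent `i` strongly envies agent `j`, i.e. for every good `g`
in `X j`, `v_i(X_i) ≥ v_i(X_j \ {g})`. -/
def EFX {G : Type*} [DecidableEq G] (v : Fin 3 → G → ℝ) (X : Fin 3 → Finset G) : Prop :=
  ∀ i j : Fin 3, ∀ g ∈ X j, val (v i) (X j \ {g}) ≤ val (v i) (X i)

/-- `κ_X(i,S)`: the minimum cardinality of a subset `S' ⊆ S` with `v_i(S') > v_i(X_i)`. -/
noncomputable def kappa {G : Type*} (v : G → ℝ) (Xi S : Finset G) : ℕ :=
  sInf {n : ℕ | ∃ S' ⊆ S, S'.card = n ∧ val v Xi < val v S'}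

/-- Agent `i` is a most envious agent for the bundle `S` under allocation `X`. -/
def MostEnvious {G : Type*} (v : Fin 3 → G → ℝ) (X : Fin 3 → Finset G)
    (i : Fin 3) (S : Finset G) : Prop :=
  val (v i) (X i) < val (v i) S ∧
    ∀ k : Fin 3, val (v k) (X k) < val (v k) S →
      kappa (v i) (X i) S ≤ kappa (v k) (X k) S

lemma subset_union_fin_three {G : Type*} [DecidableEq G] (X : Fin 3 → Finset G) (i : Fin 3) :
    X i ⊆ X 0 ∪ X 1 ∪ X 2 := by
  intro h hh
  fin_cases i <;> simp_all

lemma val_mono {G : Type*} {v : G → ℝ} {S T : Finset G} (hST : S ⊆ T)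
    (hT : ∀ g ∈ T, 0 ≤ v g) : val v S ≤ val v T :=
  Finset.sum_le_sum_of_subset_of_nonneg hST fun g hg _ => hT g hg

lemma kappa_le_card {G : Type*} {v : G → ℝ} {A S T : Finset G} (hT : T ⊆ S)
    (h : val v A < val v T) : kappa v A S ≤ T.card :=
  Nat.sInf_le ⟨T, hT, rfl, h⟩

lemma exists_subset_card_eq_kappa {G : Type*} {v : G → ℝ} {A S : Finset G}
    (h : val v A < val v S) : ∃ Z ⊆ S, Z.card = kappa v A S ∧ val v A < val v Z :=
  Nat.sInf_mem (s := {n : ℕ | ∃ S' ⊆ S, S'.card = n ∧ val v A < val v S'})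
    ⟨S.card, S, Finset.Subset.refl S, rfl, h⟩

/-- Some agent is most envious for any bundle that at least one agent prefers to their own. -/
lemma exists_mostEnvious {G : Type*} {v : Fin 3 → G → ℝ} {X : Fin 3 → Finset G} {S : Finset G}
    {s : Fin 3} (h : val (v s) (X s) < val (v s) S) : ∃ t, MostEnvious v X t S := by
  classical
  obtain ⟨t, ht, hmin⟩ := Finset.exists_min_image
    (Finset.univ.filter fun k => val (v k) (X k) < val (v k) S)
    (fun k => kappa (v k) (X k) S) ⟨s, by simpa using h⟩
  exact ⟨t, by simpa using ht, fun k hk => hmin k (by simpa using hk)⟩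

/-- For a most envious agent there is a subset of the bundle that they strictly prefer to their own
bundle, while nobody strongly envies it. -/
lemma MostEnvious.exists_subset {G : Type*} [DecidableEq G] {v : Fin 3 → G → ℝ}
    {X : Fin 3 → Finset G} {t : Fin 3} {S : Finset G} (hS : ∀ i, ∀ g ∈ S, 0 ≤ v i g)
    (ht : MostEnvious v X t S) :
    ∃ Z ⊆ S, val (v t) (X t) < val (v t) Z ∧
      ∀ i, ∀ h ∈ Z, val (v i) (Z \ {h}) ≤ val (v i) (X i) := by
  obtain ⟨Z, hZS, hcard, hZ⟩ := exists_subset_card_eq_kappa ht.1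
  refine ⟨Z, hZS, hZ, fun i h hh => ?_⟩
  by_contra! hlt
  have hsub : Z \ {h} ⊆ S := Finset.sdiff_subset.trans hZS
  have hle := ht.2 i (hlt.trans_le (val_mono hsub (hS i)))
  have hle' := kappa_le_card hsub hlt
  have hlt' : (Z \ {h}).card < Z.card :=
    Finset.card_lt_card (Finset.sdiff_ssubset (by simpa using hh) (by simp))
  omega

/-- If `t` is most envious for `X s ∪ {g}`, then permuting the bundles along `π`, where `π t = s`
and every other agent weakly prefers the bundle received, yields a dominating EFX allocation
once `t` receives a suitable subset of `X s ∪ {g}`. -/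
lemma exists_dominating_of_perm {G : Type*} [DecidableEq G] {M : Finset G}
    {v : Fin 3 → G → ℝ} (hv : ∀ i : Fin 3, ∀ g ∈ M, 0 ≤ v i g)
    {X : Fin 3 → Finset G} (hXM : ∀ i, X i ⊆ M)
    (hdisj : ∀ i j, i ≠ j → Disjoint (X i) (X j)) (hEFX : EFX v X)
    {g : G} (hg : g ∈ M) (hun : g ∉ X 0 ∪ X 1 ∪ X 2) {s t : Fin 3}
    (ht : MostEnvious v X t (X s ∪ {g})) (π : Equiv.Perm (Fin 3)) (hπ : π t = s)
    (hle : ∀ i, i ≠ t → val (v i) (X i) ≤ val (v i) (X (π i)))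
    (hlt : s ≠ t → val (v s) (X s) < val (v s) (X (π s))) :
    ∃ Y : Fin 3 → Finset G,
      (∀ i, Y i ⊆ M) ∧
      (∀ i j, i ≠ j → Disjoint (Y i) (Y j)) ∧
      Y 0 ∪ Y 1 ∪ Y 2 ⊆ X 0 ∪ X 1 ∪ X 2 ∪ {g} ∧
      EFX v Y ∧
      (∀ j, val (v j) (X j) ≤ val (v j) (Y j)) ∧
      val (v s) (X s) < val (v s) (Y s) := by
  have hSM : X s ∪ {g} ⊆ M := Finset.union_subset (hXM s) (by simpa using hg)
  obtain ⟨Z, hZS, hZ, hZE⟩ := ht.exists_subset fun i h hh => hv i h (hSM hh)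
  have hXU := subset_union_fin_three X
  have hgX : ∀ i, g ∉ X i := fun i h => hun (hXU i h)
  have hZdisj : ∀ i, i ≠ t → Disjoint Z (X (π i)) := fun i hi =>
    Disjoint.mono_left hZS <| Finset.disjoint_union_left.2
      ⟨hdisj _ _ fun h => hi (π.injective (h.symm.trans hπ.symm)),
        Finset.disjoint_singleton_left.2 (hgX _)⟩
  set Y : Fin 3 → Finset G := fun i => if i = t then Z else X (π i) with hY
  have hYt : Y t = Z := by simp [hY]
  have hYne : ∀ i, i ≠ t → Y i = X (π i) := fun i hi => by simp [hY, hi]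
  have hdom : ∀ j, val (v j) (X j) ≤ val (v j) (Y j) := by
    intro j
    rcases eq_or_ne j t with rfl | hj
    · exact hYt ▸ hZ.le
    · exact hYne j hj ▸ hle j hj
  have hYU : ∀ i, Y i ⊆ X 0 ∪ X 1 ∪ X 2 ∪ {g} := by
    intro i
    rcases eq_or_ne i t with rfl | hi
    · exact hYt ▸ hZS.trans (Finset.union_subset_union_left (hXU s))
    · exact hYne i hi ▸ (hXU _).trans Finset.subset_union_left
  refine ⟨Y, fun i => ?_, fun i j hij => ?_,
    Finset.union_subset (Finset.union_subset (hYU 0) (hYU 1)) (hYU 2),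
    fun i j h hh => ?_, hdom, ?_⟩
  · rcases eq_or_ne i t with rfl | hi
    · exact hYt ▸ hZS.trans hSM
    · exact hYne i hi ▸ hXM _
  · rcases eq_or_ne i t with rfl | hi
    · rw [hYt, hYne j hij.symm]
      exact hZdisj j hij.symm
    · rcases eq_or_ne j t with rfl | hj
      · rw [hYt, hYne i hi]
        exact (hZdisj i hi).symm
      · rw [hYne i hi, hYne j hj]
        exact hdisj _ _ (π.injective.ne hij)
  · refine le_trans ?_ (hdom i)
    rcases eq_or_ne j t with rfl | hj
    · rw [hYt] at hh ⊢
      exact hZE i h hh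
    · rw [hYne j hj] at hh ⊢
      exact hEFX i _ h hh
  · rcases eq_or_ne s t with hst | hst
    · rw [hst, hYt]
      exact hZ
    · rw [hYne s hst]
      exact hlt hst

/-- In a non-degenerate instance, if `s` is the unique source of the (acyclic) envy graph,
or `s` champions himself, then there is a Pareto dominating partial EFX allocation in which
`s` is strictly better off. -/
theorem single_source_or_self_champion_dominating {G : Type*} [DecidableEq G] (M : Finset G)
    (v : Fin 3 → G → ℝ) (hv : ∀ i : Fin 3, ∀ g ∈ M, 0 ≤ v i g)
    (hnd : ∀ i : Fin 3, ∀ S ⊆ M, ∀ T ⊆ M, S ≠ T → val (v i) S ≠ val (v i) T)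
    (X : Fin 3 → Finset G) (hXM : ∀ i, X i ⊆ M)
    (hdisj : ∀ i j, i ≠ j → Disjoint (X i) (X j))
    (hEFX : EFX v X)
    (g : G) (hg : g ∈ M) (hun : g ∉ X 0 ∪ X 1 ∪ X 2)
    (s : Fin 3)
    (hcase :
      ((∀ i : Fin 3, ¬ Relation.TransGen
          (fun a b => val (v a) (X a) < val (v a) (X b)) i i) ∧
        (∀ i : Fin 3, ¬ val (v i) (X i) < val (v i) (X s)) ∧
        (∀ j : Fin 3, (∀ i : Fin 3, ¬ val (v i) (X i) < val (v i) (X j)) → j = s)) ∨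
      MostEnvious v X s (X s ∪ {g})) :
    ∃ Y : Fin 3 → Finset G,
      (∀ i, Y i ⊆ M) ∧
      (∀ i j, i ≠ j → Disjoint (Y i) (Y j)) ∧
      Y 0 ∪ Y 1 ∪ Y 2 ⊆ X 0 ∪ X 1 ∪ X 2 ∪ {g} ∧
      EFX v Y ∧
      (∀ j, val (v j) (X j) ≤ val (v j) (Y j)) ∧
      val (v s) (X s) < val (v s) (Y s) := by
  rcases hcase with ⟨hacyc, -, huniq⟩ | hself
  · have hlt : val (v s) (X s) < val (v s) (X s ∪ {g}) := by
      have hSM : X s ∪ {g} ⊆ M := Finset.union_subset (hXM s) (by simpa using hg)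
      refine lt_of_le_of_ne (val_mono Finset.subset_union_left fun h hh => hv s h (hSM hh))
        (hnd s _ (hXM s) _ hSM fun h => hun ?_)
      have hgs : g ∈ X s := h ▸ Finset.mem_union_right _ (Finset.mem_singleton_self g)
      exact subset_union_fin_three X s hgs
    obtain ⟨t, ht⟩ := exists_mostEnvious hlt
    have henvied : ∀ j, j ≠ s → ∃ i, val (v i) (X i) < val (v i) (X j) := by
      intro j hj
      by_contra! h
      exact hj (huniq j fun i => (h i).not_gt)
    rcases eq_or_ne t s with rfl | hts
    · exact exists_dominating_of_perm hv hXM hdisj hEFX hg hun ht 1 rfl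
        (fun _ _ => le_rfl) (fun h => absurd rfl h)
    obtain ⟨u, hu⟩ := henvied t hts
    have hut : u ≠ t := by
      rintro rfl
      exact lt_irrefl _ hu
    rcases eq_or_ne u s with rfl | hus
    · refine exists_dominating_of_perm hv hXM hdisj hEFX hg hun ht (Equiv.swap u t)
        (Equiv.swap_apply_right u t) (fun i hi => ?_) (fun _ => ?_)
      · rcases eq_or_ne i u with rfl | hiu
        · rw [Equiv.swap_apply_left]
          exact hu.le
        · rw [Equiv.swap_apply_of_ne_of_ne hiu hi]
      · rwa [Equiv.swap_apply_left]
    · obtain ⟨w, hw⟩ := henvied u hus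
      have hwu : w ≠ u := by
        rintro rfl
        exact lt_irrefl _ hw
      have hwt : w ≠ t := by
        rintro rfl
        exact hacyc w (.tail (.single hw) hu)
      obtain rfl : w = s := by omega
      have hπw : (Equiv.swap w u * Equiv.swap u t) w = u := by
        rw [Equiv.Perm.mul_apply, Equiv.swap_apply_of_ne_of_ne hwu hwt, Equiv.swap_apply_left]
      have hπu : (Equiv.swap w u * Equiv.swap u t) u = t := by
        rw [Equiv.Perm.mul_apply, Equiv.swap_apply_left, Equiv.swap_apply_of_ne_of_ne hts hut.symm]
      refine exists_dominating_of_perm hv hXM hdisj hEFX hg hun ht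
        (Equiv.swap w u * Equiv.swap u t) (by simp) (fun i hi => ?_) (fun _ => ?_)
      · obtain rfl | rfl : i = w ∨ i = u := by omega
        · rw [hπw]
          exact hw.le
        · rw [hπu]
          exact hu.le
      · rwa [hπw]
  · exact exists_dominating_of_perm hv hXM hdisj hEFX hg hun hself 1 rfl
      (fun _ _ => le_rfl) (fun h => absurd rfl h)
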